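/- Let x = (x', x'') ∈ ℝ^N × ℝ^{n-N} with 3 ≤ N ≤ n, let 1 < p < ∞, and let α ∈ ℝ satisfy 2 - N < α < 0. Then for every smooth compactly supported complex-valued function u on ℝ^n whose support does not meet the set {x' = 0}, one has (∫_{ℝ^n} |x'|^{2-α} |u|^p dx) · (∫_{ℝ^n} |x'|^{α+p-2} |∇u|^p dx) ≥ ((N+α-2)/p)^p · (∫_{ℝ^n} |u|^p dx)². -/

import Mathlib

/-!
Write `r = |x'|`, `c = (N + α - 2) / p`, and `A = ∫ r ^ (α - 2) |u| ^ p`. The inequality is a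
weighted Hardy inequality followed by Cauchy–Schwarz.

* Hardy (`hardy_weighted`): `c ^ p * A ≤ ∫ r ^ (α + p - 2) |∇u| ^ p`. Put `G = r ^ (α - 2) |u| ^ p`,
  which is `C¹` with compact support since `u` vanishes near `r = 0`. Integrating by parts against
  the coordinates of `x'` gives `∫ x' · ∇'G = - N ∫ G` (`integral_euler`). On the other hand
  `x' · ∇'G = (α - 2) G + r ^ (α - 2) x' · ∇'|u| ^ p`, and the last term is controlled by
  `p r ^ (α - 2) |u| ^ (p - 1) (r |∇u|)`. Young's inequality in the form
  `p (c s) ^ (p - 1) t ≤ (p - 1) (c s) ^ p + t ^ p` with `s = |u|`, `t = r |∇u|` turns this into the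
  claim, with the sharp constant and without Hölder's inequality for integrals.
* Cauchy–Schwarz: `(∫ |u| ^ p) ^ 2 ≤ (∫ r ^ (2 - α) |u| ^ p) * A`, obtained from the sign of the
  discriminant of a nonnegative quadratic polynomial.
-/

open MeasureTheory Real

/-- The Euclidean Laplacian of a function on `ℝ^n`. -/
noncomputable def lap {n : ℕ} {E : Type*} [NormedAddCommGroup E] [NormedSpace ℝ E]
    (f : EuclideanSpace ℝ (Fin n) → E) (x : EuclideanSpace ℝ (Fin n)) : E :=
  ∑ i : Fin n,
    fderiv ℝ (fun y => fderiv ℝ f y (EuclideanSpace.single i 1)) x (EuclideanSpace.single i 1)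

/-- The Euclidean norm of the gradient of a function on `ℝ^n`. -/
noncomputable def gradNorm {n : ℕ} {E : Type*} [NormedAddCommGroup E] [NormedSpace ℝ E]
    (f : EuclideanSpace ℝ (Fin n) → E) (x : EuclideanSpace ℝ (Fin n)) : ℝ :=
  Real.sqrt (∑ i : Fin n, ‖fderiv ℝ f x (EuclideanSpace.single i 1)‖ ^ 2)

/-- The Euclidean norm of the first `N` coordinates `x'` of a point `x ∈ ℝ^n`. -/
noncomputable def prNorm (N n : ℕ) (h : N ≤ n) (x : EuclideanSpace ℝ (Fin n)) : ℝ :=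
  Real.sqrt (∑ i : Fin N, (x (Fin.castLE h i)) ^ 2)

lemma prNorm_nonneg {N n : ℕ} (h : N ≤ n) (x : EuclideanSpace ℝ (Fin n)) :
    0 ≤ prNorm N n h x := Real.sqrt_nonneg _

lemma gradNorm_nonneg {n : ℕ} (u : EuclideanSpace ℝ (Fin n) → ℂ) (x : EuclideanSpace ℝ (Fin n)) :
    0 ≤ gradNorm u x := Real.sqrt_nonneg _

lemma continuous_prNorm {N n : ℕ} (h : N ≤ n) : Continuous (prNorm N n h) := by
  unfold prNorm
  fun_prop

lemma prNorm_sq {N n : ℕ} (h : N ≤ n) (x : EuclideanSpace ℝ (Fin n)) :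
    prNorm N n h x ^ 2 = ∑ i : Fin N, (x (Fin.castLE h i)) ^ 2 :=
  Real.sq_sqrt (Finset.sum_nonneg fun _ _ => sq_nonneg _)

lemma prNorm_rpow {N n : ℕ} (h : N ≤ n) (γ : ℝ) (x : EuclideanSpace ℝ (Fin n)) :
    prNorm N n h x ^ γ = (∑ i : Fin N, (x (Fin.castLE h i)) ^ 2) ^ (γ / 2) := by
  rw [prNorm, Real.sqrt_eq_rpow,
    ← Real.rpow_mul (Finset.sum_nonneg fun _ _ => sq_nonneg _)]
  congr 1
  ring

/-- The weight `|x'| ^ γ` may be singular on `x' = 0`, but its product with a continuous function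
that vanishes off `tsupport u` is harmless because `tsupport u` avoids that set. -/
lemma integrable_weight_mul {N n : ℕ} (hNn : N ≤ n) {u : EuclideanSpace ℝ (Fin n) → ℂ}
    (hcs : HasCompactSupport u) (hsupp : ∀ x ∈ tsupport u, prNorm N n hNn x ≠ 0)
    (γ : ℝ) {h : EuclideanSpace ℝ (Fin n) → ℝ} (hc : Continuous h)
    (h0 : ∀ x, x ∉ tsupport u → h x = 0) :
    Integrable (fun x => prNorm N n hNn x ^ γ * h x) := by
  apply Continuous.integrable_of_hasCompactSupport
  · rw [continuous_iff_continuousAt]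
    intro x
    by_cases hx : x ∈ tsupport u
    · exact ((continuous_prNorm hNn).continuousAt.rpow_const (Or.inl (hsupp x hx))).mul
        hc.continuousAt
    · have hev : (fun y => prNorm N n hNn y ^ γ * h y) =ᶠ[nhds x] fun _ => 0 := by
        filter_upwards [(isClosed_tsupport u).isOpen_compl.mem_nhds hx] with y hy
        rw [h0 y hy, mul_zero]
      exact continuousAt_const.congr hev.symm
  · exact HasCompactSupport.intro hcs fun x hx => by simp [h0 x hx]

lemma hasFDerivAt_prNorm_rpow {N n : ℕ} (hNn : N ≤ n) (γ : ℝ) {x : EuclideanSpace ℝ (Fin n)}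
    (hx : prNorm N n hNn x ≠ 0) :
    HasFDerivAt (fun y => prNorm N n hNn y ^ γ)
      ((γ * prNorm N n hNn x ^ (γ - 2)) •
        ∑ i : Fin N, x (Fin.castLE hNn i) •
          (EuclideanSpace.proj (Fin.castLE hNn i) : EuclideanSpace ℝ (Fin n) →L[ℝ] ℝ)) x := by
  have hS : HasFDerivAt (fun y : EuclideanSpace ℝ (Fin n) => ∑ i : Fin N, (y (Fin.castLE hNn i)) ^ 2)
      (∑ i : Fin N, (2 * x (Fin.castLE hNn i)) •
          (EuclideanSpace.proj (Fin.castLE hNn i) : EuclideanSpace ℝ (Fin n) →L[ℝ] ℝ)) x := by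
    apply HasFDerivAt.fun_sum
    intro i _
    have := ((EuclideanSpace.proj (Fin.castLE hNn i) :
      EuclideanSpace ℝ (Fin n) →L[ℝ] ℝ).hasFDerivAt (x := x)).pow 2
    simpa using this
  have hne : (∑ i : Fin N, (x (Fin.castLE hNn i)) ^ 2) ≠ 0 := by
    rw [← prNorm_sq hNn]
    exact pow_ne_zero _ hx
  have := hS.rpow_const (p := γ / 2) (Or.inl hne)
  simp_rw [prNorm_rpow hNn]
  refine this.congr_fderiv ?_
  symm
  rw [show (γ - 2) / 2 = γ / 2 - 1 by ring, Finset.smul_sum, Finset.smul_sum]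
  refine Finset.sum_congr rfl fun i _ => ?_
  rw [smul_smul, smul_smul]
  congr 1
  ring

/-- Away from `x' = 0` this is immediate; near a point of that set the product is identically
zero. -/
lemma contDiff_weight_mul {N n : ℕ} (hNn : N ≤ n) {u : EuclideanSpace ℝ (Fin n) → ℂ} {p : ℝ}
    (hp : 1 < p) (hu : ContDiff ℝ 1 u) (hsupp : ∀ x ∈ tsupport u, prNorm N n hNn x ≠ 0) (γ : ℝ) :
    ContDiff ℝ 1 (fun x => prNorm N n hNn x ^ γ * ‖u x‖ ^ p) := by
  rw [contDiff_iff_contDiffAt]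
  intro x
  by_cases hx : x ∈ tsupport u
  · refine ContDiffAt.mul ?_ (hu.norm_rpow hp).contDiffAt
    simp_rw [prNorm_rpow hNn]
    have hne : (∑ i : Fin N, (x (Fin.castLE hNn i)) ^ 2) ≠ 0 := by
      rw [← prNorm_sq hNn]
      exact pow_ne_zero _ (hsupp x hx)
    refine ContDiffAt.rpow_const_of_ne ?_ hne
    refine ContDiffAt.sum fun i _ => ContDiffAt.pow ?_ 2
    exact (EuclideanSpace.proj (Fin.castLE hNn i) :
      EuclideanSpace ℝ (Fin n) →L[ℝ] ℝ).contDiff.contDiffAt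
  · have hev : (fun y => prNorm N n hNn y ^ γ * ‖u y‖ ^ p) =ᶠ[nhds x] fun _ => 0 := by
      filter_upwards [(isClosed_tsupport u).isOpen_compl.mem_nhds hx] with y hy
      rw [image_eq_zero_of_notMem_tsupport hy, norm_zero, Real.zero_rpow (by linarith), mul_zero]
    exact contDiffAt_const.congr_of_eventuallyEq hev

/-- The divergence theorem for the vector field `G · (x', 0)`. -/
lemma integral_euler {N n : ℕ} (hNn : N ≤ n) {G : EuclideanSpace ℝ (Fin n) → ℝ}
    (hG : ContDiff ℝ 1 G) (hc : HasCompactSupport G) :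
    Integrable (fun x => ∑ j : Fin N, x (Fin.castLE hNn j) *
      fderiv ℝ G x (EuclideanSpace.single (Fin.castLE hNn j) 1)) ∧
    ∫ x, ∑ j : Fin N, x (Fin.castLE hNn j) *
      fderiv ℝ G x (EuclideanSpace.single (Fin.castLE hNn j) 1) = - N * ∫ x, G x := by
  have hint : ∀ j : Fin N, Integrable (fun x : EuclideanSpace ℝ (Fin n) =>
      x (Fin.castLE hNn j) * fderiv ℝ G x (EuclideanSpace.single (Fin.castLE hNn j) 1)) := by
    intro j
    apply Continuous.integrable_of_hasCompactSupport
    · have := hG.continuous_fderiv one_ne_zero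
      fun_prop
    · exact (hc.fderiv_apply (𝕜 := ℝ) _).mul_left
  refine ⟨integrable_finsetSum _ fun j _ => hint j, ?_⟩
  rw [integral_finsetSum _ fun j _ => hint j]
  have key : ∀ j : Fin N, ∫ x : EuclideanSpace ℝ (Fin n),
      x (Fin.castLE hNn j) * fderiv ℝ G x (EuclideanSpace.single (Fin.castLE hNn j) 1)
        = - ∫ x, G x := by
    intro j
    set L : EuclideanSpace ℝ (Fin n) →L[ℝ] ℝ := EuclideanSpace.proj (Fin.castLE hNn j) with hL
    have hGi : Integrable G := hG.continuous.integrable_of_hasCompactSupport hc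
    have h1 : ∀ x, fderiv ℝ L x (EuclideanSpace.single (Fin.castLE hNn j) 1) = 1 := by
      intro x
      rw [L.fderiv]
      simp [hL]
    have := integral_mul_fderiv_eq_neg_fderiv_mul_of_integrable (μ := volume) (f := L) (g := G)
      (v := EuclideanSpace.single (Fin.castLE hNn j) 1) (by simpa only [h1, one_mul] using hGi)
      (hint j)
      ((L.continuous.mul hG.continuous).integrable_of_hasCompactSupport hc.mul_left)
      (fun x _ => L.differentiableAt) (fun x _ => (hG.differentiable one_ne_zero) x)
    simp only [h1, one_mul] at this
    exact this
  simp [key]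

/-- Cauchy–Schwarz for the radial derivative in the `x'` variables. -/
lemma norm_sum_le_prNorm_mul_gradNorm {N n : ℕ} (hNn : N ≤ n)
    (u : EuclideanSpace ℝ (Fin n) → ℂ) (x : EuclideanSpace ℝ (Fin n)) :
    ‖∑ j : Fin N, x (Fin.castLE hNn j) •
      fderiv ℝ u x (EuclideanSpace.single (Fin.castLE hNn j) 1)‖
      ≤ prNorm N n hNn x * gradNorm u x := by
  calc _ ≤ ∑ j : Fin N, |x (Fin.castLE hNn j)| *
        ‖fderiv ℝ u x (EuclideanSpace.single (Fin.castLE hNn j) 1)‖ := by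
        refine (norm_sum_le _ _).trans_eq (Finset.sum_congr rfl fun j _ => ?_)
        rw [norm_smul, Real.norm_eq_abs]
    _ ≤ √(∑ j : Fin N, |x (Fin.castLE hNn j)| ^ 2) *
        √(∑ j : Fin N, ‖fderiv ℝ u x (EuclideanSpace.single (Fin.castLE hNn j) 1)‖ ^ 2) :=
        Real.sum_mul_le_sqrt_mul_sqrt _ _ _
    _ ≤ _ := by
        simp only [sq_abs]
        unfold prNorm gradNorm
        refine mul_le_mul_of_nonneg_left (Real.sqrt_le_sqrt ?_) (Real.sqrt_nonneg _)
        have := Finset.sum_le_sum_of_subset_of_nonneg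
          (Finset.subset_univ (Finset.univ.map (Fin.castLEEmb hNn)))
          (f := fun i : Fin n => ‖fderiv ℝ u x (EuclideanSpace.single i 1)‖ ^ 2)
          (fun i _ _ => sq_nonneg _)
        simpa only [Finset.sum_map, Fin.castLEEmb_apply] using this

lemma young_rpow {p s t : ℝ} (hp : 1 < p) (hs : 0 ≤ s) (ht : 0 ≤ t) :
    p * s ^ (p - 1) * t ≤ (p - 1) * s ^ p + t ^ p := by
  have hp0 : 0 < p := by linarith
  have h := Real.geom_mean_le_arith_mean2_weighted (w₁ := (p - 1) / p) (w₂ := 1 / p)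
    (p₁ := s ^ p) (p₂ := t ^ p) (div_nonneg (by linarith) hp0.le) (by positivity) (by positivity)
    (by positivity) (by field_simp; ring)
  rw [← Real.rpow_mul hs, ← Real.rpow_mul ht, mul_div_cancel₀ _ hp0.ne',
    mul_div_cancel₀ _ hp0.ne', Real.rpow_one] at h
  have h2 := mul_le_mul_of_nonneg_left h hp0.le
  have e : p * ((p - 1) / p * s ^ p + 1 / p * t ^ p) = (p - 1) * s ^ p + t ^ p := by
    field_simp
  rw [e] at h2
  linarith

/-- The Euler derivative `x' · ∇'` of `|x'| ^ γ |u| ^ p`: the weight is homogeneous of degree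
`γ`. -/
lemma euler_weight_mul {N n : ℕ} (hNn : N ≤ n) {u : EuclideanSpace ℝ (Fin n) → ℂ} {p : ℝ}
    (hp : 1 < p) (hu : Differentiable ℝ u) (γ : ℝ) {x : EuclideanSpace ℝ (Fin n)}
    (hx : prNorm N n hNn x ≠ 0) :
    ∑ j : Fin N, x (Fin.castLE hNn j) *
      fderiv ℝ (fun y => prNorm N n hNn y ^ γ * ‖u y‖ ^ p) x
        (EuclideanSpace.single (Fin.castLE hNn j) 1) =
    γ * (prNorm N n hNn x ^ γ * ‖u x‖ ^ p) + prNorm N n hNn x ^ γ *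
      (p * ‖u x‖ ^ (p - 2) * inner ℝ (u x) (∑ j : Fin N, x (Fin.castLE hNn j) •
        fderiv ℝ u x (EuclideanSpace.single (Fin.castLE hNn j) 1))) := by
  have hW := hasFDerivAt_prNorm_rpow hNn γ hx
  have hU := (hasFDerivAt_norm_rpow (u x) hp).comp x (hu x).hasFDerivAt
  have hWU := (hW.mul hU).fderiv
  have hWU' : fderiv ℝ (fun y => prNorm N n hNn y ^ γ * ‖u y‖ ^ p) x = _ := hWU
  have hr : prNorm N n hNn x ^ γ
      = prNorm N n hNn x ^ (γ - 2) * ∑ j : Fin N, x (Fin.castLE hNn j) ^ 2 := by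
    have hpos : 0 < prNorm N n hNn x := lt_of_le_of_ne (prNorm_nonneg hNn x) hx.symm
    rw [← prNorm_sq hNn, ← Real.rpow_natCast, ← Real.rpow_add hpos]
    norm_num
  have hPj : ∀ j : Fin N, ∑ i : Fin N, x (Fin.castLE hNn i) *
      (EuclideanSpace.proj (Fin.castLE hNn i) : EuclideanSpace ℝ (Fin n) →L[ℝ] ℝ)
        (EuclideanSpace.single (Fin.castLE hNn j) (1 : ℝ)) = x (Fin.castLE hNn j) := by
    intro j
    simp [Fin.castLE_inj]
  rw [hWU', inner_sum]
  simp only [add_apply, smul_apply,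
    ContinuousLinearMap.comp_apply, sum_apply, smul_eq_mul,
    innerSL_apply_apply, hPj, Function.comp_apply, inner_smul_right]
  rw [Finset.mul_sum, Finset.mul_sum]
  have e : γ * (prNorm N n hNn x ^ γ * ‖u x‖ ^ p) = ∑ j : Fin N, γ * prNorm N n hNn x ^ (γ - 2) *
      ‖u x‖ ^ p * x (Fin.castLE hNn j) ^ 2 := by
    rw [← Finset.mul_sum, hr]
    ring
  rw [e, ← Finset.sum_add_distrib]
  refine Finset.sum_congr rfl fun j _ => ?_
  ring

/-- The Hardy inequality with weight `|x'| ^ (α - 2)` and its sharp constant. -/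
lemma hardy_weighted {N n : ℕ} (hNn : N ≤ n) {α p : ℝ}
    (hp : 1 < p) (hα : 2 - (N : ℝ) < α)
    {u : EuclideanSpace ℝ (Fin n) → ℂ} (hu : ContDiff ℝ 1 u) (hcs : HasCompactSupport u)
    (hsupp : ∀ x ∈ tsupport u, prNorm N n hNn x ≠ 0) :
    ((N + α - 2) / p) ^ p * (∫ x, prNorm N n hNn x ^ (α - 2) * ‖u x‖ ^ p) ≤
      ∫ x, prNorm N n hNn x ^ (α + p - 2) * gradNorm u x ^ p := by
  have hp0 : 0 < p := by linarith
  set c : ℝ := (N + α - 2) / p with hc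
  have hcpos : 0 < c := div_pos (by linarith) hp0
  have hcp : c * p = N + α - 2 := div_mul_cancel₀ _ hp0.ne'
  set G : EuclideanSpace ℝ (Fin n) → ℝ := fun x => prNorm N n hNn x ^ (α - 2) * ‖u x‖ ^ p with hGdef
  have hup0 : ∀ x, x ∉ tsupport u → ‖u x‖ ^ p = 0 := fun x hx => by
    rw [image_eq_zero_of_notMem_tsupport hx, norm_zero, Real.zero_rpow hp0.ne']
  have hgrad0 : ∀ x, x ∉ tsupport u → gradNorm u x ^ p = 0 := fun x hx => by
    have : fderiv ℝ u x = 0 :=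
      image_eq_zero_of_notMem_tsupport fun h => hx (tsupport_fderiv_subset ℝ h)
    simp [gradNorm, this, Real.zero_rpow hp0.ne']
  have hgradc : Continuous fun x => gradNorm u x ^ p := by
    have := hu.continuous_fderiv one_ne_zero
    refine Continuous.rpow_const ?_ fun _ => Or.inr hp0.le
    unfold gradNorm
    fun_prop
  have hGc : ContDiff ℝ 1 G := contDiff_weight_mul hNn hp hu hsupp _
  have hGs : HasCompactSupport G := HasCompactSupport.intro hcs fun x hx => by
    simp [hGdef, hup0 x hx]
  have hGi : Integrable G := hGc.continuous.integrable_of_hasCompactSupport hGs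
  have hBi := integrable_weight_mul hNn hcs hsupp (α + p - 2) hgradc hgrad0
  obtain ⟨hKi, hK⟩ := integral_euler hNn hGc hGs
  have hpt : ∀ x, -c ^ (p - 1) * ((∑ j : Fin N, x (Fin.castLE hNn j) *
      fderiv ℝ G x (EuclideanSpace.single (Fin.castLE hNn j) 1)) - (α - 2) * G x) ≤
      (p - 1) * c ^ p * G x + prNorm N n hNn x ^ (α + p - 2) * gradNorm u x ^ p := by
    intro x
    by_cases hx : x ∈ tsupport u
    · rw [hGdef, euler_weight_mul hNn hp (hu.differentiable one_ne_zero) (α - 2) (hsupp x hx)]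
      have hr : 0 < prNorm N n hNn x :=
        lt_of_le_of_ne (prNorm_nonneg hNn x) (hsupp x hx).symm
      have hB := norm_sum_le_prNorm_mul_gradNorm hNn u x
      set r := prNorm N n hNn x
      set D := ∑ j : Fin N, x (Fin.castLE hNn j) •
        fderiv ℝ u x (EuclideanSpace.single (Fin.castLE hNn j) 1)
      have hg := gradNorm_nonneg u x
      set g := gradNorm u x
      have hin : -(‖u x‖ ^ (p - 2) * inner ℝ (u x) D) ≤ ‖u x‖ ^ (p - 1) * (r * g) := by
        have h1 : -inner ℝ (u x) D ≤ ‖u x‖ * (r * g) :=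
          (neg_le_abs _).trans ((abs_real_inner_le_norm _ _).trans
            (mul_le_mul_of_nonneg_left hB (norm_nonneg _)))
        have h2 := mul_le_mul_of_nonneg_left h1 (Real.rpow_nonneg (norm_nonneg (u x)) (p - 2))
        have h3 : ‖u x‖ ^ (p - 1) = ‖u x‖ ^ (p - 2) * ‖u x‖ := by
          rw [← Real.rpow_add_one' (norm_nonneg _) (by linarith)]
          congr 1
          ring
        rw [h3]
        linarith
      have hy := young_rpow hp (mul_nonneg hcpos.le (norm_nonneg (u x))) (mul_nonneg hr.le hg)
      rw [Real.mul_rpow hcpos.le (norm_nonneg _), Real.mul_rpow hcpos.le (norm_nonneg _),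
        Real.mul_rpow hr.le hg] at hy
      have hrr : r ^ (α + p - 2) = r ^ (α - 2) * r ^ p := by
        rw [← Real.rpow_add hr]
        congr 1
        ring
      rw [hrr]
      have hc1 : 0 ≤ p * c ^ (p - 1) := by positivity
      have h4 := mul_le_mul_of_nonneg_left hin hc1
      have h5 := mul_le_mul_of_nonneg_left
        (h4.trans (by linarith : _ ≤ (p - 1) * (c ^ p * ‖u x‖ ^ p) + r ^ p * g ^ p))
        (Real.rpow_nonneg hr.le (α - 2))
      linarith
    · have hGx : G x = 0 := by simp [hGdef, hup0 x hx]
      have hx' : x ∉ tsupport G := fun h => hx (by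
        refine closure_minimal ?_ (isClosed_tsupport u) h
        intro y hy
        by_contra hyu
        exact hy (by simp [hGdef, hup0 y hyu]))
      have hdG : fderiv ℝ G x = 0 :=
        image_eq_zero_of_notMem_tsupport fun h => hx' (tsupport_fderiv_subset ℝ h)
      simp [hGx, hdG, hgrad0 x hx]
  have hI := integral_mono ((hKi.sub (hGi.const_mul (α - 2))).const_mul (-c ^ (p - 1)))
    ((hGi.const_mul ((p - 1) * c ^ p)).add hBi) hpt
  simp only [Pi.add_apply, Pi.sub_apply] at hI
  rw [integral_const_mul, integral_sub hKi (hGi.const_mul _), integral_const_mul, hK,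
    integral_add (hGi.const_mul _) hBi, integral_const_mul] at hI
  have hcc : c ^ p = c ^ (p - 1) * c := by
    rw [← Real.rpow_add_one hcpos.ne']
    congr 1
    ring
  have e : -c ^ (p - 1) * (-(N : ℝ) * (∫ x, G x) - (α - 2) * ∫ x, G x)
      = p * c ^ p * ∫ x, G x := by
    rw [hcc]
    linear_combination (- c ^ (p - 1) * ∫ x, G x) * hcp
  rw [e] at hI
  linarith

theorem weighted_uncertainty (N n : ℕ) (hN : 3 ≤ N) (hNn : N ≤ n) (α p : ℝ)
    (hp : 1 < p) (hα1 : 2 - (N : ℝ) < α) (hα2 : α < 0)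
    (u : EuclideanSpace ℝ (Fin n) → ℂ) (hu : ContDiff ℝ (⊤ : ℕ∞) u) (hcs : HasCompactSupport u)
    (hsupp : ∀ x ∈ tsupport u, prNorm N n hNn x ≠ 0) :
    (∫ x, prNorm N n hNn x ^ (2 - α) * ‖u x‖ ^ p) *
        (∫ x, prNorm N n hNn x ^ (α + p - 2) * gradNorm u x ^ p) ≥
      ((N + α - 2) / p) ^ p * (∫ x, ‖u x‖ ^ p) ^ 2 := by
  have hp0 : 0 < p := by linarith
  have hu1 : ContDiff ℝ 1 u := hu.of_le (by exact_mod_cast le_top)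
  have hH := hardy_weighted hNn hp hα1 hu1 hcs hsupp
  have huc : Continuous fun x => ‖u x‖ ^ p := (hu1.norm_rpow hp).continuous
  have hup0 : ∀ x, x ∉ tsupport u → ‖u x‖ ^ p = 0 := fun x hx => by
    rw [image_eq_zero_of_notMem_tsupport hx, norm_zero, Real.zero_rpow hp0.ne']
  have hi1 := integrable_weight_mul hNn hcs hsupp (2 - α) huc hup0
  have hi2 := integrable_weight_mul hNn hcs hsupp (α - 2) huc hup0
  have hi0 : Integrable fun x => ‖u x‖ ^ p :=
    huc.integrable_of_hasCompactSupport (HasCompactSupport.intro hcs hup0)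
  have hCS : (∫ x, ‖u x‖ ^ p) ^ 2 ≤ (∫ x, prNorm N n hNn x ^ (2 - α) * ‖u x‖ ^ p) *
      ∫ x, prNorm N n hNn x ^ (α - 2) * ‖u x‖ ^ p := by
    have hq : ∀ t : ℝ, 0 ≤ (∫ x, prNorm N n hNn x ^ (2 - α) * ‖u x‖ ^ p) * (t * t) +
        (-2 * ∫ x, ‖u x‖ ^ p) * t + ∫ x, prNorm N n hNn x ^ (α - 2) * ‖u x‖ ^ p := by
      intro t
      have e : (∫ x, prNorm N n hNn x ^ (2 - α) * ‖u x‖ ^ p) * (t * t) +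
        (-2 * ∫ x, ‖u x‖ ^ p) * t + ∫ x, prNorm N n hNn x ^ (α - 2) * ‖u x‖ ^ p =
          ∫ x, ((t * t) * (prNorm N n hNn x ^ (2 - α) * ‖u x‖ ^ p) + (-2 * t) * ‖u x‖ ^ p +
            prNorm N n hNn x ^ (α - 2) * ‖u x‖ ^ p) := by
        have hi3 : Integrable fun x => (t * t) * (prNorm N n hNn x ^ (2 - α) * ‖u x‖ ^ p) +
            (-2 * t) * ‖u x‖ ^ p := (hi1.const_mul _).add (hi0.const_mul _)
        rw [integral_add hi3 hi2,
          integral_add (hi1.const_mul _) (hi0.const_mul _), integral_const_mul,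
          integral_const_mul]
        ring
      rw [e]
      refine integral_nonneg fun x => ?_
      by_cases hx : x ∈ tsupport u
      · have hr : 0 < prNorm N n hNn x :=
          lt_of_le_of_ne (prNorm_nonneg hNn x) (hsupp x hx).symm
        -- With `w = r ^ (2 - α)`, the integrand is `w⁻¹ (t w - 1) ^ 2 |u| ^ p`.
        have hinv : prNorm N n hNn x ^ (α - 2) = (prNorm N n hNn x ^ (2 - α))⁻¹ := by
          rw [← Real.rpow_neg hr.le]
          congr 1
          ring
        have hw : 0 < prNorm N n hNn x ^ (2 - α) := Real.rpow_pos_of_pos hr _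
        have hs : (t * t) * (prNorm N n hNn x ^ (2 - α) * ‖u x‖ ^ p) + (-2 * t) * ‖u x‖ ^ p +
            prNorm N n hNn x ^ (α - 2) * ‖u x‖ ^ p = (prNorm N n hNn x ^ (2 - α))⁻¹ *
              (t * prNorm N n hNn x ^ (2 - α) - 1) ^ 2 * ‖u x‖ ^ p := by
          rw [hinv]
          field_simp
          ring
        simp only [Pi.zero_apply]
        rw [hs]
        positivity
      · simp [hup0 x hx]
    have := discrim_le_zero hq
    rw [discrim] at this
    linarith
  have hA : 0 ≤ ∫ x, prNorm N n hNn x ^ (2 - α) * ‖u x‖ ^ p :=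
    integral_nonneg fun x => mul_nonneg (Real.rpow_nonneg (prNorm_nonneg hNn x) _)
      (Real.rpow_nonneg (norm_nonneg _) _)
  have hc : 0 ≤ ((N + α - 2) / p) ^ p :=
    Real.rpow_nonneg (div_nonneg (by linarith) hp0.le) _
  have h1 := mul_le_mul_of_nonneg_left hCS hc
  have h2 := mul_le_mul_of_nonneg_left hH hA
  linarith
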